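/- Fix an integer r ≥ 1. Let a = X₀ and b = X₁ be the indeterminates of ℝ[a,b], let D₁ be the ℝ-derivation with D₁(a) = a, D₁(b) = b, and let D₂ be the ℝ-derivation with D₂(a) = a^r b, D₂(b) = a^{r−1} b². Define D₂₁ = D₂ ∘ D₁ (first apply D₁, then D₂). Then for all n ≥ 0, D₂₁^n(b) = (∏_{j=0}^{n−1} (j·r + 1))² · a^{n(r−1)} · b^{n+1}. (In multifactorial notation, the coefficient is (((n−1)r+1)!_r)² and the exponent of a is nr−n.) -/

import Mathlib

open MvPolynomial Finset

/-- A derivation that scales `a` and `b` by the same factor `c` scales the monomial `a ^ p * b ^ q`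
by `(p + q) * c`. -/
theorem Derivation.pow_mul_pow_of_eq_mul {R A : Type*} [CommRing R] [CommRing A] [Algebra R A]
    (D : Derivation R A A) {a b c : A} (ha : D a = a * c) (hb : D b = b * c) (p q : ℕ) :
    D (a ^ p * b ^ q) = ((p + q : ℕ) : A) * (a ^ p * b ^ q) * c := by
  have pow_eq : ∀ {x : A}, D x = x * c → ∀ m : ℕ, D (x ^ m) = (m : A) * x ^ m * c := by
    intro x hx m
    induction m with
    | zero => simp
    | succ m ih =>
      rw [pow_succ, D.leibniz, ih, hx, smul_eq_mul, smul_eq_mul]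
      push_cast
      ring
  rw [D.leibniz, pow_eq ha, pow_eq hb, smul_eq_mul, smul_eq_mul]
  push_cast
  ring

theorem Derivation.map_natCast_mul {R A : Type*} [CommRing R] [CommRing A] [Algebra R A]
    (D : Derivation R A A) (k : ℕ) (x : A) : D ((k : A) * x) = (k : A) * D x := by
  rw [← nsmul_eq_mul, map_nsmul, nsmul_eq_mul]

/-- For `D₂₁ = D₂ ∘ D₁`,
`D₂₁^n(b) = (((n−1)r+1)!_r)² a^{nr−n} b^{n+1}`. -/
theorem D21_iterate_b (r : ℕ) (hr : 1 ≤ r)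
    (D₁ D₂ : Derivation ℝ (MvPolynomial (Fin 2) ℝ) (MvPolynomial (Fin 2) ℝ))
    (h1a : D₁ (X 0) = X 0) (h1b : D₁ (X 1) = X 1)
    (h2a : D₂ (X 0) = X 0 ^ r * X 1) (h2b : D₂ (X 1) = X 0 ^ (r - 1) * X 1 ^ 2)
    (n : ℕ) :
    (⇑D₂ ∘ ⇑D₁)^[n] (X 1 : MvPolynomial (Fin 2) ℝ) =
      (((∏ j ∈ range n, (j * r + 1)) ^ 2 : ℕ) : MvPolynomial (Fin 2) ℝ) *
        (X 0 ^ (n * (r - 1)) * X 1 ^ (n + 1)) := by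
  obtain ⟨s, rfl⟩ := Nat.exists_eq_add_of_le' hr
  simp only [Nat.add_sub_cancel] at h2b ⊢
  have monomial₁ := D₁.pow_mul_pow_of_eq_mul (c := 1) (by rw [h1a, mul_one]) (by rw [h1b, mul_one])
  have monomial₂ := D₂.pow_mul_pow_of_eq_mul (c := X 0 ^ s * X 1)
    (by rw [h2a]; ring) (by rw [h2b]; ring)
  induction n with
  | zero => simp
  | succ n ih =>
    rw [Function.iterate_succ_apply', ih, Function.comp_apply, Derivation.map_natCast_mul,
      monomial₁, mul_one, Derivation.map_natCast_mul, Derivation.map_natCast_mul, monomial₂,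
      prod_range_succ]
    push_cast
    ring
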